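/- arXiv:1304.2436 — 5 statements merged into one kernel-verified Lean document; each statement's English description precedes it below -/
import Mathlib

section
/- Every element P of GL(2,ℤ) of finite order with P ≠ I and P ≠ -I is conjugate in GL(2,ℤ) to one of the five matrices M₁ = [[1,0],[0,-1]], M₂ = [[0,1],[1,0]], M₃ = [[0,1],[-1,-1]], M₄ = [[0,1],[-1,0]], M₅ = [[0,1],[-1,1]]. -/
open Matrix

def StdC (M : Matrix (Fin 2) (Fin 2) ℤ) : Prop :=
  ∃ U V : Matrix (Fin 2) (Fin 2) ℤ, U * V = 1 ∧ U * M * V ∈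
        ({!![1, 0; 0, -1], !![0, 1; 1, 0], !![0, 1; -1, -1],
          !![0, 1; -1, 0], !![0, 1; -1, 1]} : Set (Matrix (Fin 2) (Fin 2) ℤ))

theorem StdC.of_conj {M : Matrix (Fin 2) (Fin 2) ℤ} (U V : Matrix (Fin 2) (Fin 2) ℤ)
    (h : U * V = 1) (hc : StdC (U * M * V)) : StdC M := by
  obtain ⟨A, B, hAB, hm⟩ := hc
  refine ⟨A * U, V * B, ?_, ?_⟩
  · calc A * U * (V * B) = A * (U * V) * B := by simp only [Matrix.mul_assoc]
      _ = 1 := by rw [h, Matrix.mul_one, hAB]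
  · simpa only [Matrix.mul_assoc] using hm

theorem StdC.shear {a b c d : ℤ} (k : ℤ)
    (h : StdC !![a + k * c, b + k * d - k * (a + k * c); c, d - k * c]) :
    StdC !![a, b; c, d] := by
  refine StdC.of_conj !![1, k; 0, 1] !![1, -k; 0, 1] ?_ ?_
  · simp [Matrix.one_fin_two]
  · convert h using 2
    simp only [Matrix.mul_fin_two]
    congr 1
    ext i j
    fin_cases i <;> fin_cases j <;> simp <;> ring

theorem StdC.swap {a b c d : ℤ} (h : StdC !![d, c; b, a]) : StdC !![a, b; c, d] := by
  refine StdC.of_conj !![0, 1; 1, 0] !![0, 1; 1, 0] ?_ ?_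
  · simp [Matrix.one_fin_two]
  · simpa using h

theorem StdC.sign {a b c d : ℤ} (h : StdC !![a, -b; -c, d]) : StdC !![a, b; c, d] := by
  refine StdC.of_conj !![1, 0; 0, -1] !![1, 0; 0, -1] ?_ ?_
  · simp [Matrix.one_fin_two]
  · simpa using h

theorem StdC.base {M : Matrix (Fin 2) (Fin 2) ℤ} (h : M ∈
        ({!![1, 0; 0, -1], !![0, 1; 1, 0], !![0, 1; -1, -1],
          !![0, 1; -1, 0], !![0, 1; -1, 1]} : Set (Matrix (Fin 2) (Fin 2) ℤ))) : StdC M :=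
  ⟨1, 1, by simp, by simpa using h⟩

theorem StdC.m1 : StdC !![1, 0; 0, -1] := StdC.base (by simp)
theorem StdC.m2 : StdC !![0, 1; 1, 0] := StdC.base (by simp)
theorem StdC.m3 : StdC !![0, 1; -1, -1] := StdC.base (by simp)
theorem StdC.m4 : StdC !![0, 1; -1, 0] := StdC.base (by simp)
theorem StdC.m5 : StdC !![0, 1; -1, 1] := StdC.base (by simp)

theorem StdC.e1 : StdC !![1, 1; 0, -1] := by
  refine StdC.of_conj !![1, 1; 1, 0] !![0, 1; 1, -1] ?_ ?_
  · simp [Matrix.one_fin_two]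
  · simpa using StdC.m2

theorem StdC.e2 : StdC !![-1, 1; 0, 1] := by
  refine StdC.of_conj !![-1, 1; 1, 0] !![0, 1; 1, 1] ?_ ?_
  · simp [Matrix.one_fin_two]
  · simpa using StdC.m2

theorem StdC.zero_pos (b : ℤ) : StdC !![1, b; 0, -1] := by
  apply StdC.shear (b / 2)
  have h : b + b / 2 * (-1) - b / 2 * (1 + b / 2 * 0) = b % 2 := by omega
  rw [h]
  rcases Int.emod_two_eq_zero_or_one b with h | h <;> rw [h]
  · simpa using StdC.m1
  · simpa using StdC.e1

theorem StdC.zero_neg (b : ℤ) : StdC !![-1, b; 0, 1] := by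
  apply StdC.shear (-(b / 2))
  have h : b + -(b / 2) * 1 - -(b / 2) * (-1 + -(b / 2) * 0) = b % 2 := by omega
  rw [h]
  rcases Int.emod_two_eq_zero_or_one b with h | h <;> rw [h]
  · apply StdC.swap
    simpa using StdC.m1
  · simpa using StdC.e2

set_option maxHeartbeats 2000000 in
theorem StdC.reduced {a b c d : ℤ} (hc : c ≠ 0) (h1 : |a - d| ≤ |c|) (h2 : |c| ≤ |b|)
    (h : (a * d - b * c = 1 ∧ (a + d = 0 ∨ a + d = 1 ∨ a + d = -1)) ∨
      (a * d - b * c = -1 ∧ a + d = 0)) : StdC !![a, b; c, d] := by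
  have hc1 : 1 ≤ |c| := Int.one_le_abs hc
  have hsq : (a - d) ^ 2 ≤ |b| * |c| := by
    rw [← sq_abs]; nlinarith [abs_nonneg (a - d)]
  have hid : (a - d) ^ 2 + 4 * (b * c) = (a + d) ^ 2 - 4 * (a * d - b * c) := by ring
  rw [← abs_mul] at hsq
  have hle : |c| * |c| ≤ |b * c| := by rw [abs_mul]; nlinarith
  have hbb : |b| ≤ |b * c| := by rw [abs_mul]; nlinarith
  have hbc : |b * c| ≤ 1 := by
    rcases abs_cases (b * c) with ⟨e, _⟩ | ⟨e, _⟩ <;> rw [e] at hsq ⊢ <;>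
    rcases h with ⟨e1, e2 | e2 | e2⟩ | ⟨e1, e2⟩ <;> rw [e1, e2] at hid <;>
    nlinarith [sq_nonneg (a - d)]
  have hb1 := abs_le.1 (hbb.trans hbc)
  have hc2 := abs_le.1 ((h2.trans hbb).trans hbc)
  have had := abs_le.1 (h1.trans ((h2.trans hbb).trans hbc))
  obtain ⟨hb1, hb2⟩ := hb1
  obtain ⟨hc2, hc3⟩ := hc2
  have ha1 : -1 ≤ a := by omega
  have ha2 : a ≤ 1 := by omega
  have hd1 : -1 ≤ d := by omega
  have hd2 : d ≤ 1 := by omega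
  clear hsq hid hle hbb hbc h1 h2 hc1
  interval_cases a <;> interval_cases d <;> (try omega) <;>
  interval_cases c <;> (try omega) <;> interval_cases b <;> (try omega) <;>
  first
  | exact StdC.m2
  | exact StdC.m3
  | exact StdC.m4
  | exact StdC.m5
  | (apply StdC.sign; simp only [neg_neg]; first | exact StdC.m2 | exact StdC.m3 | exact StdC.m4 | exact StdC.m5)
  | (apply StdC.swap; first | exact StdC.m2 | exact StdC.m3 | exact StdC.m4 | exact StdC.m5)
  | (apply StdC.swap; apply StdC.sign; simp only [neg_neg]; first | exact StdC.m2 | exact StdC.m3 | exact StdC.m4 | exact StdC.m5)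

theorem exists_shift (x c : ℤ) (hc : c ≠ 0) : ∃ k : ℤ, |x + 2 * (k * c)| ≤ |c| := by
  have hc1 : 1 ≤ |c| := Int.one_le_abs hc
  have key : ∃ q : ℤ, |x + 2 * (q * |c|)| ≤ |c| := by
    refine ⟨-((x + |c|) / (2 * |c|)), ?_⟩
    have e := Int.emod_add_mul_ediv (x + |c|) (2 * |c|)
    have e1 := Int.emod_nonneg (x + |c|) (b := 2 * |c|) (by omega)
    have e2 := Int.emod_lt_of_pos (x + |c|) (b := 2 * |c|) (by omega)
    rw [abs_le]
    constructor <;> nlinarith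
  obtain ⟨q, hq⟩ := key
  rcases abs_choice c with h | h
  · exact ⟨q, by rw [h] at hq ⊢; exact hq⟩
  · refine ⟨-q, ?_⟩
    have : -q * c = q * |c| := by rw [h]; ring
    rw [this]; exact hq

theorem StdC.main (n : ℕ) : ∀ a b c d : ℤ, c.natAbs ≤ n →
    ((a * d - b * c = 1 ∧ (a + d = 0 ∨ a + d = 1 ∨ a + d = -1)) ∨
      (a * d - b * c = -1 ∧ a + d = 0)) → StdC !![a, b; c, d] := by
  induction n with
  | zero =>
    intro a b c d hc h
    have hc : c = 0 := by omega
    subst hc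
    have hd : d * a = 1 ∨ d * a = -1 := by
      rcases h with ⟨h, _⟩ | ⟨h, _⟩
      · left; linarith
      · right; linarith
    have hu : a = 1 ∨ a = -1 := by
      rcases hd with hd | hd
      · exact Int.isUnit_iff.1 (IsUnit.of_mul_eq_one d (by linarith))
      · exact Int.isUnit_iff.1 (IsUnit.of_mul_eq_one (-d) (by linarith))
    rcases hu with rfl | rfl
    · obtain rfl : d = -1 := by omega
      exact StdC.zero_pos b
    · obtain rfl : d = 1 := by omega
      exact StdC.zero_neg b
  | succ n ih =>
    intro a b c d hc h
    by_cases hc0 : c = 0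
    · exact ih a b c d (by simp [hc0]) h
    obtain ⟨k, hk⟩ := exists_shift (a - d) c hc0
    apply StdC.shear k
    have hk' : |(a + k * c) - (d - k * c)| ≤ |c| := by
      convert hk using 2; ring
    have h' : ((a + k * c) * (d - k * c) - (b + k * d - k * (a + k * c)) * c = 1 ∧
        ((a + k * c) + (d - k * c) = 0 ∨ (a + k * c) + (d - k * c) = 1 ∨
          (a + k * c) + (d - k * c) = -1)) ∨
        ((a + k * c) * (d - k * c) - (b + k * d - k * (a + k * c)) * c = -1 ∧
          (a + k * c) + (d - k * c) = 0) := by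
      have e1 : (a + k * c) * (d - k * c) - (b + k * d - k * (a + k * c)) * c
        = a * d - b * c := by ring
      have e2 : (a + k * c) + (d - k * c) = a + d := by ring
      rw [e1, e2]; exact h
    generalize a + k * c = a' at *
    generalize d - k * c = d' at *
    generalize b + k * d - k * a' = b' at *
    by_cases hb : |c| ≤ |b'|
    · exact StdC.reduced hc0 hk' hb h'
    · apply StdC.swap
      apply ih
      · rw [Int.abs_eq_natAbs, Int.abs_eq_natAbs] at hb
        omega
      · rwa [mul_comm d', mul_comm c, add_comm d']

def lucasU (t : ℤ) : ℕ → ℤ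
  | 0 => 0
  | 1 => 1
  | (n + 2) => t * lucasU t (n + 1) - lucasU t n

theorem lucasU_grow (t : ℤ) (ht : 2 ≤ |t|) (n : ℕ) : |lucasU t n| < |lucasU t (n + 1)| := by
  induction n with
  | zero => simp [lucasU]
  | succ n ih =>
    have h : |t * lucasU t (n + 1)| - |lucasU t n| ≤ |t * lucasU t (n + 1) - lucasU t n| :=
      abs_sub_abs_le_abs_sub _ _
    rw [abs_mul] at h
    change _ < |t * lucasU t (n + 1) - lucasU t n|
    nlinarith [abs_nonneg (lucasU t (n + 1))]

theorem pow_lucas (a b c d : ℤ) (hdet : a * d - b * c = 1) (n : ℕ) :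
    !![a, b; c, d] ^ (n + 1) = !![lucasU (a + d) (n + 1) * a - lucasU (a + d) n,
      lucasU (a + d) (n + 1) * b; lucasU (a + d) (n + 1) * c,
      lucasU (a + d) (n + 1) * d - lucasU (a + d) n] := by
  induction n with
  | zero => simp [lucasU]
  | succ n ih =>
    rw [pow_succ, ih, Matrix.mul_fin_two]
    have e : lucasU (a + d) (n + 1 + 1) = (a + d) * lucasU (a + d) (n + 1) - lucasU (a + d) n := rfl
    rw [e]
    generalize lucasU (a + d) (n + 1) = u
    generalize lucasU (a + d) n = v
    ext i j
    fin_cases i <;> fin_cases j <;> simp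
    · linear_combination (-u) * hdet
    · ring
    · ring
    · linear_combination (-u) * hdet

theorem scalar_of_big (a b c d : ℤ) (hdet : a * d - b * c = 1) (ht : 2 ≤ |a + d|) (n : ℕ)
    (hn : !![a, b; c, d] ^ (n + 1) = 1) :
    b = 0 ∧ c = 0 ∧ a = d ∧ (a = 1 ∨ a = -1) := by
  rw [pow_lucas a b c d hdet] at hn
  have hu : lucasU (a + d) (n + 1) ≠ 0 := by
    have := lucasU_grow (a + d) ht n
    intro h
    rw [h] at this
    simp at this
    exact absurd this (not_lt.2 (abs_nonneg _))
  have e00 := congrFun (congrFun hn 0) 0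
  have e01 := congrFun (congrFun hn 0) 1
  have e10 := congrFun (congrFun hn 1) 0
  have e11 := congrFun (congrFun hn 1) 1
  simp [hu] at e00 e01 e10 e11
  have had : a = d := by
    apply mul_left_cancel₀ hu
    linarith
  refine ⟨e01, e10, had, ?_⟩
  subst e01 e10 had
  exact Int.isUnit_iff.1 (IsUnit.of_mul_eq_one a (by linarith))

/-- Every element of `GL(2,ℤ)` of finite order other than `±I` is conjugate in
`GL(2,ℤ)` to one of five standard matrices, of orders 2, 2, 3, 4 and 6. -/
theorem finite_order_GL2Z_conjugate_to_standard
    (P : GL (Fin 2) ℤ) (hfin : IsOfFinOrder P) (h1 : P ≠ 1) (h2 : P ≠ -1) :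
    ∃ Q : GL (Fin 2) ℤ,
      ((Q * P * Q⁻¹ : GL (Fin 2) ℤ) : Matrix (Fin 2) (Fin 2) ℤ) ∈
        ({!![1, 0; 0, -1], !![0, 1; 1, 0], !![0, 1; -1, -1],
          !![0, 1; -1, 0], !![0, 1; -1, 1]} : Set (Matrix (Fin 2) (Fin 2) ℤ)) := by
  suffices hs : StdC (P : Matrix (Fin 2) (Fin 2) ℤ) by
    obtain ⟨U, V, hUV, hm⟩ := hs
    exact ⟨⟨U, V, hUV, mul_eq_one_comm.1 hUV⟩, hm⟩
  obtain ⟨n, hn0, hn⟩ := isOfFinOrder_iff_pow_eq_one.1 hfin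
  obtain ⟨n, rfl⟩ : ∃ m, n = m + 1 := ⟨n - 1, by omega⟩
  have hM : (P : Matrix (Fin 2) (Fin 2) ℤ) ^ (n + 1) = 1 := by
    rw [← Units.val_pow_eq_pow_val, hn, Units.val_one]
  have hd := Int.isUnit_iff.1 ((Matrix.isUnit_iff_isUnit_det _).1 P.isUnit)
  have h1' : (P : Matrix (Fin 2) (Fin 2) ℤ) ≠ 1 := fun h => h1 (Units.ext h)
  have h2' : (P : Matrix (Fin 2) (Fin 2) ℤ) ≠ -1 := fun h => h2 (Units.ext h)
  generalize (P : Matrix (Fin 2) (Fin 2) ℤ) = M at *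
  rw [Matrix.det_fin_two] at hd
  rw [Matrix.eta_fin_two M] at hM h1' h2' ⊢
  generalize M 0 0 = a at *
  generalize M 0 1 = b at *
  generalize M 1 0 = c at *
  generalize M 1 1 = d at *
  apply StdC.main _ a b c d le_rfl
  rcases hd with hd | hd
  · left
    refine ⟨hd, ?_⟩
    by_contra hcon
    obtain ⟨rfl, rfl, rfl, rfl | rfl⟩ := scalar_of_big a b c d hd (by rw [Int.abs_eq_natAbs]; omega) n hM
    · exact h1' (by simp [Matrix.one_fin_two])
    · exact h2' (by simp [Matrix.one_fin_two])
  · right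
    refine ⟨hd, ?_⟩
    by_contra hcon
    have hp : !![a * a + b * c, a * b + b * d; c * a + d * c, c * b + d * d] ^ (n + 1) = 1 := by
      rw [← Matrix.mul_fin_two, ← pow_two, ← pow_mul, mul_comm, pow_mul, hM, one_pow]
    have htr : (a * a + b * c) + (c * b + d * d) = (a + d) ^ 2 + 2 := by
      linear_combination (-2) * hd
    have hpos : 0 < (a + d) ^ 2 := by positivity
    obtain ⟨-, -, e, e'⟩ := scalar_of_big _ _ _ _
      (by linear_combination (a * d - b * c - 1) * hd) (by rw [htr]; exact le_trans (by omega) (le_abs_self _)) n hp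
    omega
end

section
/- For each of the five matrices P ∈ {M₁, M₂, M₃, M₄, M₅}, the centralizer of P in GL(2,ℤ) is a finite group. -/
open Matrix

/-- A product of two integers equal to `±1` forces both factors to be `±1`. -/
lemma aux_unit (x y : ℤ) (h : x * y = 1 ∨ x * y = -1) : (x = 1 ∨ x = -1) ∧ (y = 1 ∨ y = -1) := by
  have hu : IsUnit (x * y) := Int.isUnit_iff.2 h
  exact ⟨Int.isUnit_iff.1 (isUnit_of_mul_isUnit_left hu),
    Int.isUnit_iff.1 (isUnit_of_mul_isUnit_right hu)⟩

lemma aux_sq (x : ℤ) (h : x ^ 2 ≤ 2) : -1 ≤ x ∧ x ≤ 1 := by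
  constructor <;> nlinarith

/-- If all the entries are bounded, the set of invertible matrices is finite. -/
lemma aux_finite (S : Set (GL (Fin 2) ℤ))
    (h : ∀ g ∈ S, ∀ i j, (g : Matrix (Fin 2) (Fin 2) ℤ) i j ∈ Set.Icc (-2 : ℤ) 2) : S.Finite := by
  have hfin : (Set.pi Set.univ fun _ : Fin 2 => Set.pi Set.univ fun _ : Fin 2 =>
      Set.Icc (-2 : ℤ) 2).Finite :=
    Set.Finite.pi fun _ => Set.Finite.pi fun _ => Set.finite_Icc _ _
  refine Set.Finite.of_finite_image (f := fun g : GL (Fin 2) ℤ =>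
    fun i j => (g : Matrix (Fin 2) (Fin 2) ℤ) i j) (hfin.subset ?_) ?_
  · rintro _ ⟨g, hg, rfl⟩ i _ j _
    exact h g hg i j
  · intro g _ g' _ hgg
    exact Units.ext hgg

/-- For each of the five standard finite-order matrices `P` in `GL(2,ℤ)`,
the centralizer of `P` in `GL(2,ℤ)` is finite. -/
theorem centralizer_of_standard_finite_order_is_finite
    (M : Matrix (Fin 2) (Fin 2) ℤ)
    (hM : M ∈ ({!![1, 0; 0, -1], !![0, 1; 1, 0], !![0, 1; -1, -1],
          !![0, 1; -1, 0], !![0, 1; -1, 1]} : Set (Matrix (Fin 2) (Fin 2) ℤ))) :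
    {g : GL (Fin 2) ℤ | (g : Matrix (Fin 2) (Fin 2) ℤ) * M
        = M * (g : Matrix (Fin 2) (Fin 2) ℤ)}.Finite := by
  apply aux_finite
  intro g hg
  have hdet : IsUnit (g : Matrix (Fin 2) (Fin 2) ℤ).det :=
    (Matrix.isUnit_iff_isUnit_det _).1 g.isUnit
  rw [Int.isUnit_iff, Matrix.det_fin_two] at hdet
  replace hg : (g : Matrix (Fin 2) (Fin 2) ℤ) * M = M * (g : Matrix (Fin 2) (Fin 2) ℤ) := hg
  generalize (g : Matrix (Fin 2) (Fin 2) ℤ) = A at hg hdet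
  have h00 := congrFun (congrFun hg 0) 0
  have h01 := congrFun (congrFun hg 0) 1
  have h10 := congrFun (congrFun hg 1) 0
  suffices hs : (-2 ≤ A 0 0 ∧ A 0 0 ≤ 2) ∧ (-2 ≤ A 0 1 ∧ A 0 1 ≤ 2) ∧
      (-2 ≤ A 1 0 ∧ A 1 0 ≤ 2) ∧ (-2 ≤ A 1 1 ∧ A 1 1 ≤ 2) by
    obtain ⟨h1, h2, h3, h4⟩ := hs
    intro i j
    fin_cases i <;> fin_cases j
    exacts [h1, h2, h3, h4]
  simp only [Matrix.mul_apply, Fin.sum_univ_two] at h00 h01 h10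
  generalize A 0 0 = a at *
  generalize A 0 1 = b at *
  generalize A 1 0 = c at *
  generalize A 1 1 = d at *
  simp only [Set.mem_insert_iff, Set.mem_singleton_iff] at hM
  rcases hM with rfl | rfl | rfl | rfl | rfl <;> simp at h00 h01 h10
  · have hb : b = 0 := by omega
    have hc : c = 0 := by omega
    subst hb hc
    have := aux_unit a d (by simpa using hdet)
    omega
  · have hc : c = b := by omega
    have hd : d = a := by omega
    subst hc hd
    have := aux_unit (d - c) (d + c) (by
      rcases hdet with h | h
      · left; linarith
      · right; linarith)
    omega
  · have hc : c = -b := by omega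
    have hd : d = a - b := by omega
    subst hc hd
    have hN : a ^ 2 - a * b + b ^ 2 ≤ 1 := by rcases hdet with h | h <;> nlinarith
    have h1 := aux_sq a (by nlinarith [sq_nonneg (2 * b - a)])
    have h2 := aux_sq b (by nlinarith [sq_nonneg (2 * a - b)])
    omega
  · have hc : c = -b := by omega
    have hd : d = a := by omega
    subst hc hd
    have hN : d ^ 2 + b ^ 2 ≤ 1 := by rcases hdet with h | h <;> nlinarith
    have h1 := aux_sq d (by nlinarith [sq_nonneg b])
    have h2 := aux_sq b (by nlinarith [sq_nonneg d])
    omega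
  · have hc : c = -b := by omega
    have hd : d = a + b := by omega
    subst hc hd
    have hN : a ^ 2 + a * b + b ^ 2 ≤ 1 := by rcases hdet with h | h <;> nlinarith
    have h1 := aux_sq a (by nlinarith [sq_nonneg (2 * b + a)])
    have h2 := aux_sq b (by nlinarith [sq_nonneg (2 * a + b)])
    omega
end

section
/- Let H be an infinite subgroup of GL(2,ℤ) containing an infinite cyclic subgroup of finite index (equivalently, H has two ends). Then one of the following holds: (1) H is infinite cyclic; (2) H is generated by an element of infinite order together with -I, and is isomorphic to ℤ × ℤ/2ℤ; (3) H = ⟨A,B⟩ where A² = B² = I; (4) H = ⟨A,B,-I⟩ where A² = B² = I; (5) H = ⟨A,B⟩ where A has order 4 and B² = I; (6) H = ⟨A,B⟩ where A and B each have order 4. In cases (3)–(6), neither A nor B equals -I. -/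
open Matrix Subgroup

namespace TwoEnded

lemma ch (M : Matrix (Fin 2) (Fin 2) ℤ) :
    M * M = (M 0 0 + M 1 1) • M - M.det • (1 : Matrix (Fin 2) (Fin 2) ℤ) := by
  ext i j
  fin_cases i <;> fin_cases j <;> simp [Matrix.mul_apply, Fin.sum_univ_two, det_fin_two, -zsmul_eq_mul, -zsmul_one] <;> ring

lemma entries_comm {X T : Matrix (Fin 2) (Fin 2) ℤ} (h : X * T = T * X) :
    X 0 1 * T 1 0 = T 0 1 * X 1 0 ∧
    (X 0 0 - X 1 1) * T 0 1 = X 0 1 * (T 0 0 - T 1 1) ∧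
    (X 0 0 - X 1 1) * T 1 0 = X 1 0 * (T 0 0 - T 1 1) := by
  have h00 := congrFun (congrFun h 0) 0
  have h01 := congrFun (congrFun h 0) 1
  have h10 := congrFun (congrFun h 1) 0
  simp only [Matrix.mul_apply, Fin.sum_univ_two] at h00 h01 h10
  refine ⟨?_, ?_, ?_⟩
  · linear_combination h00
  · linear_combination h01
  · linear_combination -h10

lemma scalar_of {X : Matrix (Fin 2) (Fin 2) ℤ} (hb : X 0 1 = 0) (hc : X 1 0 = 0)
    (had : X 0 0 = X 1 1) (hdet : X.det = 1 ∨ X.det = -1) : X = 1 ∨ X = -1 := by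
  rw [det_fin_two, hb, hc, ← had] at hdet
  have : X 0 0 = 1 ∨ X 0 0 = -1 := by
    rcases hdet with h | h
    · exact Int.eq_one_or_neg_one_of_mul_eq_one (by linarith : X 0 0 * X 0 0 = 1)
    · nlinarith [mul_self_nonneg (X 0 0)]
  rcases this with h | h
  · left
    ext i j
    fin_cases i <;> fin_cases j <;> simp [hb, hc, ← had, h]
  · right
    ext i j
    fin_cases i <;> fin_cases j <;> simp [hb, hc, ← had, h]

lemma comm_of_comm {X Y T : Matrix (Fin 2) (Fin 2) ℤ} (hX : X * T = T * X) (hY : Y * T = T * Y)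
    (hT : T 0 1 ≠ 0 ∨ T 1 0 ≠ 0 ∨ T 0 0 - T 1 1 ≠ 0) : X * Y = Y * X := by
  obtain ⟨x1, x2, x3⟩ := entries_comm hX
  obtain ⟨y1, y2, y3⟩ := entries_comm hY
  have key : X 0 1 * Y 1 0 = Y 0 1 * X 1 0 ∧
    (X 0 0 - X 1 1) * Y 0 1 = X 0 1 * (Y 0 0 - Y 1 1) ∧
    (X 0 0 - X 1 1) * Y 1 0 = X 1 0 * (Y 0 0 - Y 1 1) := by
    rcases hT with h | h | h <;>
    · refine ⟨?_, ?_, ?_⟩ <;> apply mul_left_cancel₀ h <;> grind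
  obtain ⟨k1, k2, k3⟩ := key
  ext i j
  fin_cases i <;> fin_cases j <;> simp [Matrix.mul_apply, Fin.sum_univ_two]
  · linear_combination k1
  · linear_combination k2
  · linear_combination -k3
  · linear_combination -k1

lemma growth {Y : Matrix (Fin 2) (Fin 2) ℤ} (hdet : Y.det = 1) (htr : 2 ≤ |Y 0 0 + Y 1 1|)
    (n : ℕ) : ∃ a b : ℤ, Y ^ (n + 1) = a • Y - b • (1 : Matrix (Fin 2) (Fin 2) ℤ) ∧ |b| < |a| := by
  induction n with
  | zero => exact ⟨1, 0, by simp, by simp⟩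
  | succ n ih =>
    obtain ⟨a, b, h, hab⟩ := ih
    refine ⟨a * (Y 0 0 + Y 1 1) - b, a, ?_, ?_⟩
    · rw [pow_succ, h, sub_mul, smul_mul_assoc, ch Y, hdet, smul_mul_assoc, one_mul]
      module
    · have h1 : |a * (Y 0 0 + Y 1 1)| - |b| ≤ |a * (Y 0 0 + Y 1 1) - b| :=
        abs_sub_abs_le_abs_sub _ _
      rw [abs_mul] at h1
      nlinarith [abs_nonneg a, abs_nonneg b]

lemma scalar_of_pow {Y : Matrix (Fin 2) (Fin 2) ℤ} (hdet : Y.det = 1)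
    (htr : 2 ≤ |Y 0 0 + Y 1 1|) {n : ℕ} (hn : 0 < n) (h : Y ^ n = 1) : Y = 1 ∨ Y = -1 := by
  obtain ⟨m, rfl⟩ : ∃ m, n = m + 1 := ⟨n - 1, by omega⟩
  obtain ⟨a, b, hab, hlt⟩ := growth hdet htr m
  rw [h] at hab
  have ha : a ≠ 0 := by
    rintro rfl
    simp at hlt
    exact absurd hlt (not_lt.mpr (abs_nonneg b))
  have h00 := congrFun (congrFun hab 0) 0
  have h01 := congrFun (congrFun hab 0) 1
  have h10 := congrFun (congrFun hab 1) 0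
  have h11 := congrFun (congrFun hab 1) 1
  simp [ha, -zsmul_eq_mul, -zsmul_one] at h00 h01 h10 h11
  refine scalar_of h01 h10 ?_ (Or.inl hdet)
  apply mul_left_cancel₀ ha
  linarith

lemma tr_det_of_pow {X : Matrix (Fin 2) (Fin 2) ℤ} (hdet : X.det = 1 ∨ X.det = -1)
    {n : ℕ} (hn : 0 < n) (h : X ^ n = 1) (h1 : X ≠ 1) (h2 : X ≠ -1) :
    (X.det = 1 ∧ |X 0 0 + X 1 1| ≤ 1) ∨ (X.det = -1 ∧ X 0 0 + X 1 1 = 0) := by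
  have hd2 : (X * X).det = 1 := by
    rw [det_mul]; rcases hdet with h | h <;> rw [h] <;> norm_num
  have hp : (X * X) ^ n = 1 := by rw [← pow_two, ← pow_mul, mul_comm, pow_mul, h, one_pow]
  have htr : (X * X) 0 0 + (X * X) 1 1 = (X 0 0 + X 1 1) ^ 2 - 2 * X.det := by
    simp [Matrix.mul_apply, Fin.sum_univ_two, det_fin_two]; ring
  by_cases hc : 2 ≤ |(X * X) 0 0 + (X * X) 1 1|
  · have hs := scalar_of_pow hd2 hc hn hp
    have hT : X 0 0 + X 1 1 = 0 := by
      by_contra hT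
      have e01 : (X * X) 0 1 = 0 := by rcases hs with h | h <;> rw [h] <;> simp
      have e10 : (X * X) 1 0 = 0 := by rcases hs with h | h <;> rw [h] <;> simp
      have e : (X * X) 0 0 = (X * X) 1 1 := by rcases hs with h | h <;> rw [h] <;> simp
      simp only [Matrix.mul_apply, Fin.sum_univ_two] at e01 e10 e
      have hs' : X = 1 ∨ X = -1 := by
        refine scalar_of ?_ ?_ ?_ hdet <;> apply mul_left_cancel₀ hT <;> linarith
      tauto
    rcases hdet with h | h
    · left; rw [hT]; simp [h]
    · right; exact ⟨h, hT⟩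
  · rw [htr] at hc
    push Not at hc
    rw [abs_lt] at hc
    rcases hdet with h | h
    · left
      refine ⟨h, ?_⟩
      rw [h] at hc
      rw [abs_le]
      constructor <;> nlinarith
    · rw [h] at hc
      nlinarith [sq_nonneg (X 0 0 + X 1 1)]

lemma pow12 {T : Matrix (Fin 2) (Fin 2) ℤ} (hd : T.det = 1) (ht : |T 0 0 + T 1 1| ≤ 1) :
    T ^ 12 = 1 := by
  have h := ch T
  rw [hd] at h
  have h6 : T ^ 12 = ((T * T) * (T * T) * (T * T)) * ((T * T) * (T * T) * (T * T)) := by noncomm_ring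
  rw [abs_le] at ht
  have : T 0 0 + T 1 1 = -1 ∨ T 0 0 + T 1 1 = 0 ∨ T 0 0 + T 1 1 = 1 := by omega
  rcases this with e | e | e <;> rw [e] at h
  · have h3 : T * T * T = 1 := by
      rw [h]; simp [sub_mul]; rw [h]; simp
    have : T ^ 12 = (T * T * T) ^ 4 := by noncomm_ring
    rw [this, h3, one_pow]
  · have : T ^ 12 = (T * T) ^ 6 := by noncomm_ring
    rw [this, h]; simp; norm_num [Even.neg_pow]
  · have h3 : T * T * T = -1 := by
      rw [h]; simp [sub_mul]; rw [h]; simp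
    have : T ^ 12 = (T * T * T) ^ 4 := by noncomm_ring
    rw [this, h3]; norm_num [Even.neg_pow]

lemma torsion_mat {X T : Matrix (Fin 2) (Fin 2) ℤ} (hX : X.det = 1 ∨ X.det = -1)
    (hT : T.det = 1 ∨ T.det = -1) {n : ℕ} (hn : 0 < n) (h : X ^ n = 1) (h1 : X ≠ 1) (h2 : X ≠ -1)
    (hc : X * T = T * X) : T ^ 12 = 1 := by
  have hscal : T 0 1 = 0 → T 1 0 = 0 → T 0 0 = T 1 1 → T ^ 12 = 1 := by
    intro a b c
    rcases scalar_of a b c hT with h | h <;> rw [h] <;> norm_num [Even.neg_pow]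
  have hsq : T * T = 1 → T ^ 12 = 1 := by
    intro h
    have : T ^ 12 = (T * T) ^ 6 := by noncomm_ring
    rw [this, h, one_pow]
  obtain ⟨c1, c2, c3⟩ := entries_comm hc
  rcases tr_det_of_pow hX hn h h1 h2 with ⟨hd, ht⟩ | ⟨hd, ht⟩
  · -- elliptic case
    have hdisc : (X 0 0 - X 1 1) ^ 2 + 4 * X 0 1 * X 1 0 < 0 := by
      rw [abs_le] at ht
      rw [det_fin_two] at hd
      nlinarith
    by_cases hs : T 0 1 = 0
    · have hq : X 0 1 ≠ 0 := by
        intro hq; rw [hq] at hdisc; nlinarith [sq_nonneg (X 0 0 - X 1 1)]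
      apply hscal hs
      · rw [hs] at c1; simpa [hq] using c1
      · rw [hs] at c2
        have : T 0 0 - T 1 1 = 0 := by simpa [hq] using c2.symm
        linarith
    · have hs2 : 0 < T 0 1 ^ 2 := by positivity
      have hq : X 0 1 ≠ 0 := by
        intro hq; rw [hq] at hdisc; nlinarith [sq_nonneg (X 0 0 - X 1 1)]
      have hq2 : 0 < X 0 1 ^ 2 := by positivity
      have hdT : (T 0 0 - T 1 1) ^ 2 + 4 * T 0 1 * T 1 0 < 0 := by
        have : X 0 1 ^ 2 * ((T 0 0 - T 1 1) ^ 2 + 4 * T 0 1 * T 1 0) =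
          T 0 1 ^ 2 * ((X 0 0 - X 1 1) ^ 2 + 4 * X 0 1 * X 1 0) := by grind
        by_contra hcon
        push Not at hcon
        nlinarith [mul_nonneg hq2.le hcon, mul_pos hs2 (neg_pos.mpr hdisc)]
      have hdd : (T 0 0 + T 1 1) ^ 2 < 4 * T.det := by
        rw [det_fin_two]; nlinarith
      rcases hT with h | h
      · apply pow12 h
        rw [h] at hdd
        rw [abs_le]; constructor <;> nlinarith
      · rw [h] at hdd; nlinarith [sq_nonneg (T 0 0 + T 1 1)]
  · -- reflection case
    have hs : X 1 1 = - X 0 0 := by linarith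
    rw [det_fin_two, hs] at hd
    rw [hs] at c2 c3
    obtain ⟨m, hm⟩ : ∃ m, m = X 0 0 * (T 0 0 - T 1 1) + T 0 1 * X 1 0 + T 1 0 * X 0 1 := ⟨_, rfl⟩
    have e1 : 2 * T 0 1 = m * X 0 1 := by grind
    have e2 : 2 * T 1 0 = m * X 1 0 := by grind
    have e3 : T 0 0 - T 1 1 = m * X 0 0 := by grind
    have e4 : (T 0 0 + T 1 1) ^ 2 - m ^ 2 = 4 * T.det := by
      rw [det_fin_two]; grind
    obtain ⟨k, hk⟩ : ∃ k, T 0 0 + T 1 1 + m = 2 * k := by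
      rcases Int.even_or_odd' (T 0 0 + T 1 1 + m) with ⟨k, h | h⟩
      · exact ⟨k, h⟩
      · exfalso
        have : (2 * k + 1) * (2 * k + 1 - 2 * m) = 4 * T.det := by
          rw [← h, ← e4]; ring
        have : 2 * (2 * (T.det - k * k + k * m) - 2 * k + m) = 1 := by linarith
        omega
    have hkm : k * (k - m) = T.det := by
      have : T 0 0 + T 1 1 = 2 * k - m := by linarith
      rw [this] at e4
      linarith
    have hku : k = 1 ∨ k = -1 := by
      rcases hT with h | h
      · exact Int.eq_one_or_neg_one_of_mul_eq_one (hkm.trans h)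
      · exact Int.eq_one_or_neg_one_of_mul_eq_neg_one (hkm.trans h)
    have hm' : m = 0 ∨ (m = 2 * k ∧ T.det = -1) := by
      rcases hT with h | h <;> rcases hku with rfl | rfl <;> omega
    rcases hm' with rfl | ⟨h, hd'⟩
    · apply hscal <;> linarith
    · apply hsq
      rw [ch T, hd']
      have : T 0 0 + T 1 1 = 0 := by linarith
      rw [this]; simp

lemma gl_det (x : GL (Fin 2) ℤ) : x.1.det = 1 ∨ x.1.det = -1 := by
  have : IsUnit x.1.det := (Matrix.isUnit_iff_isUnit_det _).1 x.isUnit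
  exact Int.isUnit_iff.1 this

lemma torsion {x t : GL (Fin 2) ℤ} (hx : IsOfFinOrder x) (ht : ¬ IsOfFinOrder t)
    (hc : x * t = t * x) : x = 1 ∨ x = -1 := by
  by_contra hcon
  push Not at hcon
  obtain ⟨n, hn, h⟩ := isOfFinOrder_iff_pow_eq_one.1 hx
  apply ht
  refine isOfFinOrder_iff_pow_eq_one.2 ⟨12, by norm_num, ?_⟩
  apply Units.ext
  have := torsion_mat (X := x.1) (T := t.1) (gl_det x) (gl_det t) hn
    (by simpa using congrArg Units.val h)
    (fun h => hcon.1 (Units.ext h)) (fun h => hcon.2 (Units.ext h))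
    (by simpa using congrArg Units.val hc)
  simpa using this

lemma cent_comm {x y t : GL (Fin 2) ℤ} (ht : ¬ IsOfFinOrder t)
    (hx : x * t = t * x) (hy : y * t = t * y) : x * y = y * x := by
  apply Units.ext
  have := comm_of_comm (X := x.1) (Y := y.1) (T := t.1) (by simpa using congrArg Units.val hx)
    (by simpa using congrArg Units.val hy) (by
      by_contra hcon
      push Not at hcon
      apply ht
      refine isOfFinOrder_iff_pow_eq_one.2 ⟨2, by norm_num, ?_⟩
      rcases scalar_of hcon.1 hcon.2.1 (by linarith [hcon.2.2]) (gl_det t) with h | h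
      · have : t = 1 := Units.ext h
        simp [this]
      · have : t = -1 := Units.ext h
        simp [this])
  simpa using this

lemma exists_t (H : Subgroup (GL (Fin 2) ℤ))
    (hends : ∃ Z : Subgroup (GL (Fin 2) ℤ), Z ≤ H ∧ IsCyclic Z ∧ Infinite Z ∧
      (Z.subgroupOf H).FiniteIndex) (hinf : Infinite H) :
    ∃ t ∈ H, ¬ IsOfFinOrder t ∧ (∃ n : ℕ, 0 < n ∧ ∀ h ∈ H, h ^ n ∈ zpowers t) ∧
      ∀ h ∈ H, h * t * h⁻¹ = t ∨ h * t * h⁻¹ = t⁻¹ := by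
  obtain ⟨Z, hZ, hcyc, hZinf, hfi⟩ := hends
  have hcyc' : IsCyclic (Z.subgroupOf H) :=
    isCyclic_of_injective (Subgroup.subgroupOfEquivOfLe hZ).toMonoidHom
      (Subgroup.subgroupOfEquivOfLe hZ).injective
  set N := (Z.subgroupOf H).normalCore with hN
  have hNle : N ≤ Z.subgroupOf H := Subgroup.normalCore_le _
  have hNc : IsCyclic N := isCyclic_of_injective (Subgroup.inclusion hNle)
    (Subgroup.inclusion_injective hNle)
  have hNfi : N.FiniteIndex := inferInstance
  obtain ⟨t, ht⟩ := (Subgroup.isCyclic_iff_exists_zpowers_eq_top N).1 hNc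
  have hord : ¬ IsOfFinOrder t := by
    intro hfin
    have : Finite (zpowers t) := finite_zpowers.2 hfin
    rw [ht] at this
    have := Finite.of_subgroup_quotient (H := N)
    exact not_finite H
  have hordG : ¬ IsOfFinOrder (t : GL (Fin 2) ℤ) := by
    rwa [Submonoid.isOfFinOrder_coe (H := H.toSubmonoid) (x := t)]
  have hz : ∀ k l : ℤ, t ^ k = t ^ l → k = l := fun k l h =>
    injective_zpow_iff_not_isOfFinOrder.2 hord h
  refine ⟨t, t.2, hordG, ⟨N.index, Nat.pos_of_ne_zero hNfi.index_ne_zero, ?_⟩, ?_⟩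
  · intro h hh
    have hmem : (⟨h, hh⟩ : H) ^ N.index ∈ zpowers t := by
      rw [ht]; exact N.pow_index_mem ⟨h, hh⟩
    obtain ⟨k, hk⟩ := hmem
    exact ⟨k, by simpa using congrArg Subtype.val hk⟩
  · intro h hh
    have hn : N.Normal := inferInstance
    have htN : t ∈ N := by rw [← ht]; exact mem_zpowers t
    set g : H := ⟨h, hh⟩ with hg
    have a1 := hn.conj_mem t htN g
    have a2 := hn.conj_mem t htN g⁻¹
    rw [← ht] at a1 a2
    obtain ⟨k, hk⟩ := a1
    obtain ⟨l, hl⟩ := a2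
    simp only at hk hl
    have : t ^ (k * l) = t ^ (1 : ℤ) := by
      have : (g⁻¹ * t * g⁻¹⁻¹) ^ k = t := by
        rw [conj_zpow, hk]; group
      rw [mul_comm, _root_.zpow_mul, hl, this, zpow_one]
    have := hz _ _ this
    rcases Int.eq_one_or_neg_one_of_mul_eq_one this with rfl | rfl
    · left; simpa [hg] using (congrArg Subtype.val hk).symm
    · right; simpa [hg] using (congrArg Subtype.val hk).symm

lemma exists_c (H : Subgroup (GL (Fin 2) ℤ)) {t : GL (Fin 2) ℤ} (htH : t ∈ H)
    (ht : ¬ IsOfFinOrder t) {n : ℕ} (hn : 0 < n) (hpow : ∀ h ∈ H, h ^ n ∈ zpowers t) :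
    ∃ c ∈ H, c * t = t * c ∧ ¬ IsOfFinOrder c ∧
      ∀ x ∈ H, x * t = t * x → ∃ k : ℤ, x = c ^ k ∨ x = -1 * c ^ k := by
  let S : AddSubgroup ℤ :=
    { carrier := {m | ∃ x ∈ H, x * t = t * x ∧ x ^ n = t ^ m}
      zero_mem' := ⟨1, H.one_mem, by simp, by simp⟩
      add_mem' := by
        rintro a b ⟨x, hx, hxt, hxa⟩ ⟨y, hy, hyt, hyb⟩
        refine ⟨x * y, H.mul_mem hx hy, (Commute.mul_left hxt hyt : Commute _ _), ?_⟩
        rw [Commute.mul_pow (cent_comm ht hxt hyt), hxa, hyb, _root_.zpow_add]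
      neg_mem' := by
        rintro a ⟨x, hx, hxt, hxa⟩
        refine ⟨x⁻¹, H.inv_mem hx, (Commute.inv_left hxt : Commute _ _), ?_⟩
        rw [inv_pow, hxa, _root_.zpow_neg] }
  obtain ⟨g, hg⟩ := Int.subgroup_cyclic S
  have hgS : g ∈ S := by rw [hg]; exact AddSubgroup.subset_closure rfl
  obtain ⟨c, hcH, hct, hcg⟩ := hgS
  have hg0 : g ≠ 0 := by
    rintro rfl
    have : (n : ℤ) ∈ S := ⟨t, htH, rfl, by simp⟩
    rw [hg, AddSubgroup.mem_closure_singleton] at this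
    obtain ⟨k, hk⟩ := this
    simp at hk
    omega
  refine ⟨c, hcH, hct, ?_, ?_⟩
  · intro hc
    have : IsOfFinOrder (t ^ g) := by rw [← hcg]; exact hc.pow
    obtain ⟨m, hm, h⟩ := isOfFinOrder_iff_pow_eq_one.1 this
    rw [← zpow_natCast, ← _root_.zpow_mul] at h
    have := injective_zpow_iff_not_isOfFinOrder.2 ht (h.trans (zpow_zero t).symm)
    simp [hg0] at this
    omega
  · intro x hx hxt
    obtain ⟨m, hm⟩ := hpow x hx
    have : m ∈ S := ⟨x, hx, hxt, hm.symm⟩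
    rw [hg, AddSubgroup.mem_closure_singleton] at this
    obtain ⟨k, hk⟩ := this
    refine ⟨k, ?_⟩
    have hckt : Commute (c ^ (-k)) t := Commute.zpow_left hct _
    have hfin : IsOfFinOrder (x * c ^ (-k)) := by
      refine isOfFinOrder_iff_pow_eq_one.2 ⟨n, hn, ?_⟩
      rw [Commute.mul_pow (cent_comm ht hxt hckt), ← zpow_natCast (c ^ (-k)), zpow_comm,
        zpow_natCast, hcg, ← hm, ← hk, ← _root_.zpow_mul]
      simp only
      rw [← _root_.zpow_add]
      rw [show k • g + g * -k = 0 by simp; ring, zpow_zero]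
    rcases torsion hfin ht (Commute.mul_left hxt hckt : Commute _ _) with h | h
    · left; rw [_root_.zpow_neg, mul_inv_eq_one] at h; exact h
    · right; rw [_root_.zpow_neg, mul_inv_eq_iff_eq_mul] at h; exact h

lemma neg_one_ne : (-1 : GL (Fin 2) ℤ) ≠ 1 := by
  intro h
  have := congrFun (congrFun (congrArg (fun u : GL (Fin 2) ℤ => u.1) h) 0) 0
  simp at this

lemma iso_of {K : Type*} [Group K] (c e : K) (hc : ¬ IsOfFinOrder c) (he : orderOf e = 2)
    (hce : Commute c e) (hK : ∀ x : K, ∃ k : ℤ, x = c ^ k ∨ x = e * c ^ k) :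
    Nonempty (K ≃* Multiplicative ℤ × Multiplicative (ZMod 2)) := by
  have e2 : e ^ 2 = 1 := by rw [← he]; exact pow_orderOf_eq_one e
  have hinf : Infinite (zpowers c) := (infinite_zpowers.2 hc).to_subtype
  have hcard : Nat.card (zpowers e) = 2 := by rw [Nat.card_zpowers, he]
  have i1 : zpowers c ≃* Multiplicative ℤ := intCyclicMulEquiv.symm
  have i2 : zpowers e ≃* Multiplicative (ZMod 2) :=
    mulEquivOfCyclicCardEq (by rw [hcard]; simp)
  have hcomm : ∀ (a : zpowers c) (b : zpowers e),
      Commute ((zpowers c).subtype a) ((zpowers e).subtype b) := by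
    rintro ⟨_, i, rfl⟩ ⟨_, j, rfl⟩
    exact hce.zpow_zpow i j
  let f := MonoidHom.noncommCoprod (zpowers c).subtype (zpowers e).subtype hcomm
  have hbij : Function.Bijective f := by
    constructor
    · rw [injective_iff_map_eq_one]
      rintro ⟨⟨_, i, rfl⟩, ⟨_, j, rfl⟩⟩ h
      simp only [f, MonoidHom.noncommCoprod_apply, Subgroup.subtype_apply] at h
      have h2 : c ^ (i * 2) = c ^ (0 : ℤ) := by
        have : (c ^ i * e ^ j) ^ 2 = 1 := by rw [h, one_pow]
        rw [(hce.zpow_zpow i j).mul_pow, ← zpow_natCast (e ^ j), zpow_comm, zpow_natCast, e2,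
          _root_.one_zpow, mul_one, ← zpow_natCast, ← _root_.zpow_mul] at this
        rw [zpow_zero]; exact this
      have := injective_zpow_iff_not_isOfFinOrder.2 hc h2
      have hi : i = 0 := by omega
      subst hi
      simp only [zpow_zero, one_mul] at h
      ext <;> simp [h]
    · intro x
      obtain ⟨k, h | h⟩ := hK x
      · exact ⟨(⟨c ^ k, k, rfl⟩, 1), by simp [f, h]⟩
      · exact ⟨(⟨c ^ k, k, rfl⟩, ⟨e, mem_zpowers e⟩), by
          simp [f, h]; exact (hce.zpow_left k).eq⟩
  exact ⟨(MulEquiv.ofBijective f hbij).symm.trans (i1.prodCongr i2)⟩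

lemma order_four {a : GL (Fin 2) ℤ} (h : a ^ 2 = -1) : orderOf a = 4 := by
  have := orderOf_eq_prime_pow (x := a) (p := 2) (n := 1) (by rw [pow_one, h]; exact neg_one_ne)
    (by rw [show 2 ^ (1 + 1) = 2 * 2 by norm_num, pow_mul, h]; simp)
  simpa using this

end TwoEnded

/-- Classification of the two-ended subgroups of `GL(2,ℤ)`. -/
theorem two_ended_subgroup_GL2Z_classification
    (H : Subgroup (GL (Fin 2) ℤ)) (hinf : Infinite H)
    (hends : ∃ Z : Subgroup (GL (Fin 2) ℤ), Z ≤ H ∧ IsCyclic Z ∧ Infinite Z ∧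
      (Z.subgroupOf H).FiniteIndex) :
    -- (1) H is infinite cyclic
    (IsCyclic H) ∨
    -- (2) H is generated by an element of infinite order together with -I,
    --     and is isomorphic to ℤ × ℤ/2ℤ
    (∃ A : GL (Fin 2) ℤ, ¬ IsOfFinOrder A ∧ H = Subgroup.closure {A, -1} ∧
      Nonempty (H ≃* Multiplicative ℤ × Multiplicative (ZMod 2))) ∨
    -- (3) H = ⟨A, B⟩ with A² = B² = I
    (∃ A B : GL (Fin 2) ℤ, A ≠ -1 ∧ B ≠ -1 ∧ A ^ 2 = 1 ∧ B ^ 2 = 1 ∧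
      H = Subgroup.closure {A, B}) ∨
    -- (4) H = ⟨A, B, -I⟩ with A² = B² = I
    (∃ A B : GL (Fin 2) ℤ, A ≠ -1 ∧ B ≠ -1 ∧ A ^ 2 = 1 ∧ B ^ 2 = 1 ∧
      H = Subgroup.closure {A, B, -1}) ∨
    -- (5) H = ⟨A, B⟩ with A of order 4 and B² = I
    (∃ A B : GL (Fin 2) ℤ, A ≠ -1 ∧ B ≠ -1 ∧ orderOf A = 4 ∧ B ^ 2 = 1 ∧
      H = Subgroup.closure {A, B}) ∨
    -- (6) H = ⟨A, B⟩ with A and B each of order 4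
    (∃ A B : GL (Fin 2) ℤ, A ≠ -1 ∧ B ≠ -1 ∧ orderOf A = 4 ∧ orderOf B = 4 ∧
      H = Subgroup.closure {A, B}) := by
  classical
  obtain ⟨t, htH, ht, ⟨n, hn, hpow⟩, hconj⟩ := TwoEnded.exists_t H hends hinf
  obtain ⟨c, hcH, hct, hc, hC⟩ := TwoEnded.exists_c H htH ht hn hpow
  have hneg : ∀ x : GL (Fin 2) ℤ, Commute x (-1) := fun x => by simp [Commute, SemiconjBy]
  by_cases hall : ∀ h ∈ H, h * t = t * h
  · by_cases hm : (-1 : GL (Fin 2) ℤ) ∈ H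
    · right; left
      refine ⟨c, hc, ?_, ?_⟩
      · apply le_antisymm
        · intro x hx
          have h1 : c ∈ Subgroup.closure {c, (-1 : GL (Fin 2) ℤ)} :=
            Subgroup.subset_closure (by simp)
          have h2 : (-1 : GL (Fin 2) ℤ) ∈ Subgroup.closure {c, (-1 : GL (Fin 2) ℤ)} :=
            Subgroup.subset_closure (by simp)
          obtain ⟨k, h | h⟩ := hC x hx (hall x hx)
          · rw [h]; exact zpow_mem h1 k
          · rw [h]; exact mul_mem h2 (zpow_mem h1 k)
        · rw [Subgroup.closure_le]
          rintro x (rfl | rfl)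
          · exact hcH
          · exact hm
      · refine TwoEnded.iso_of (⟨c, hcH⟩ : H) ⟨-1, hm⟩ ?_ ?_ ?_ ?_
        · rwa [← Submonoid.isOfFinOrder_coe (H := H.toSubmonoid)]
        · apply orderOf_eq_prime
          · ext1; simp
          · intro h; exact TwoEnded.neg_one_ne (congrArg Subtype.val h)
        · exact Subtype.ext (hneg c)
        · rintro ⟨x, hx⟩
          obtain ⟨k, h⟩ := hC x hx (hall x hx)
          refine ⟨k, h.imp (fun h => Subtype.ext ?_) (fun h => Subtype.ext ?_)⟩
          · simpa using h
          · simpa using h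
    · left
      rw [Subgroup.isCyclic_iff_exists_zpowers_eq_top]
      refine ⟨c, le_antisymm (by simpa using hcH) ?_⟩
      intro x hx
      obtain ⟨k, h | h⟩ := hC x hx (hall x hx)
      · exact ⟨k, h.symm⟩
      · exfalso; apply hm
        rw [eq_mul_inv_of_mul_eq h.symm]
        exact mul_mem hx (inv_mem (zpow_mem hcH k))
  · push Not at hall
    obtain ⟨b, hbH, hbt⟩ := hall
    have hflip : ∀ y ∈ H, y * t ≠ t * y → y * t * y⁻¹ = t⁻¹ := by
      intro y hy hyt
      rcases hconj y hy with h | h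
      · exact absurd (mul_inv_eq_iff_eq_mul.1 h) hyt
      · exact h
    have hsq : ∀ y ∈ H, y * t ≠ t * y → y ^ 2 = 1 ∨ y ^ 2 = -1 := by
      intro y hy hyt
      have hf := hflip y hy hyt
      have hcomm : (y ^ 2) * t = t * y ^ 2 := by
        have h1 : y * t = t⁻¹ * y := mul_inv_eq_iff_eq_mul.1 hf
        have h2 : y * t⁻¹ = t * y := by
          rw [mul_inv_eq_iff_eq_mul, mul_assoc, h1, mul_inv_cancel_left]
        rw [pow_two, mul_assoc, h1, ← mul_assoc, h2, mul_assoc]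
      refine TwoEnded.torsion ?_ ht hcomm
      obtain ⟨m, hm⟩ := hpow _ (H.pow_mem hy 2)
      simp only at hm
      have h1 : y * t ^ m * y⁻¹ = t ^ m := by
        rw [hm]; group
      rw [← conj_zpow, hf, _root_.inv_zpow', ] at h1
      have := injective_zpow_iff_not_isOfFinOrder.2 ht h1
      have hm0 : m = 0 := by omega
      refine isOfFinOrder_iff_pow_eq_one.2 ⟨n, hn, ?_⟩
      rw [← hm, hm0, zpow_zero]
    obtain ⟨a, rfl⟩ : ∃ a, a * b⁻¹ = c := ⟨c * b, by group⟩
    have haH : a ∈ H := by simpa using mul_mem hcH hbH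
    have hat : a * t ≠ t * a := by
      intro h
      apply hbt
      have h3 : Commute (a * b⁻¹) t := hct
      have h4 : Commute ((a * b⁻¹)⁻¹ * a) t := h3.inv_left.mul_left h
      simpa using h4.eq
    have hne : ∀ y : GL (Fin 2) ℤ, y * t ≠ t * y → y ≠ -1 := by
      rintro y hy rfl
      simp at hy
    have hgen : ∀ K : Subgroup (GL (Fin 2) ℤ), K ≤ H → a ∈ K → b ∈ K →
        ((-1 : GL (Fin 2) ℤ) ∈ H → (-1 : GL (Fin 2) ℤ) ∈ K) → H = K := by
      intro K hK ha hb hm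
      have hcK : a * b⁻¹ ∈ K := mul_mem ha (inv_mem hb)
      have hcent : ∀ x ∈ H, x * t = t * x → x ∈ K := by
        intro x hx hxt
        obtain ⟨k, h | h⟩ := hC x hx hxt
        · rw [h]; exact zpow_mem hcK k
        · have : (-1 : GL (Fin 2) ℤ) ∈ H := by
            rw [eq_mul_inv_of_mul_eq h.symm]
            exact mul_mem hx (inv_mem (zpow_mem hcH k))
          rw [h]; exact mul_mem (hm this) (zpow_mem hcK k)
      refine le_antisymm (fun x hx => ?_) hK
      by_cases hxt : x * t = t * x
      · exact hcent x hx hxt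
      · have hbx : b * x ∈ K := by
          apply hcent _ (mul_mem hbH hx)
          have h1 : x * t = t⁻¹ * x := mul_inv_eq_iff_eq_mul.1 (hflip x hx hxt)
          have hf : b * t = t⁻¹ * b := mul_inv_eq_iff_eq_mul.1 (hflip b hbH hbt)
          have h2 : b * t⁻¹ = t * b := by
            rw [mul_inv_eq_iff_eq_mul, mul_assoc, hf, mul_inv_cancel_left]
          rw [mul_assoc, h1, ← mul_assoc, h2, mul_assoc]
        simpa using mul_mem (inv_mem hb) hbx
    have hsub : Subgroup.closure {a, b} ≤ H := by
      rw [Subgroup.closure_le]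
      rintro x (rfl | rfl)
      · exact haH
      · exact hbH
    have hma : a ∈ Subgroup.closure {a, b} := Subgroup.subset_closure (by simp)
    have hmb : b ∈ Subgroup.closure {a, b} := Subgroup.subset_closure (by simp)
    have na := hne a hat
    have nb := hne b hbt
    right; right
    rcases hsq a haH hat with ha2 | ha2 <;> rcases hsq b hbH hbt with hb2 | hb2
    · by_cases hm : (-1 : GL (Fin 2) ℤ) ∈ H
      · right; left
        refine ⟨a, b, na, nb, ha2, hb2, hgen _ ?_ ?_ ?_ ?_⟩
        · rw [Subgroup.closure_le]
          rintro x (rfl | rfl | rfl)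
          · exact haH
          · exact hbH
          · exact hm
        · exact Subgroup.subset_closure (by simp)
        · exact Subgroup.subset_closure (by simp)
        · exact fun _ => Subgroup.subset_closure (by simp)
      · left
        exact ⟨a, b, na, nb, ha2, hb2, hgen _ hsub hma hmb (fun h => absurd h hm)⟩
    · right; right; left
      refine ⟨b, a, nb, na, TwoEnded.order_four hb2, ha2, ?_⟩
      rw [Set.pair_comm]
      exact hgen _ hsub hma hmb (fun _ => hb2 ▸ pow_mem hmb 2)
    · right; right; left
      exact ⟨a, b, na, nb, TwoEnded.order_four ha2, hb2,
        hgen _ hsub hma hmb (fun _ => ha2 ▸ pow_mem hma 2)⟩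
    · right; right; right
      exact ⟨a, b, na, nb, TwoEnded.order_four ha2, TwoEnded.order_four hb2,
        hgen _ hsub hma hmb (fun _ => ha2 ▸ pow_mem hma 2)⟩
end

section
/- Let a, b, c be integers with a > 1 and a² - bc = 1, let Ψ = [[a,b],[c,a]], and let ξ = (ξ₁, ξ₂) ∈ ℤ² be a vector not in the image of the map ℤ² → ℤ² given by I - Ψ. Let Θ be the bordered 3×3 integer matrix [[1,0,0],[ξ₁,a,b],[ξ₂,c,a]] (which lies in SL(3,ℤ)). Then Θ is not conjugate in GL(3,ℤ) to any block diagonal matrix, i.e., there is no P ∈ GL(3,ℤ) such that PΘP⁻¹ has the form [[ε,0,0],[0,m₁₁,m₁₂],[0,m₂₁,m₂₂]]. -/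
open Matrix

/-- If `ξ ∉ Im(I - Ψ)`, then the bordered matrix `Θ = [[1,0],[ξ,Ψ]] ∈ SL(3,ℤ)`
is not conjugate in `GL(3,ℤ)` to a block diagonal matrix. -/
theorem bordered_matrix_not_conjugate_to_block_diagonal
    (a b c : ℤ) (ha : 1 < a) (h : a ^ 2 - b * c = 1) (ξ₁ ξ₂ : ℤ)
    (hξ : ¬ ∃ v : Fin 2 → ℤ,
      ((1 : Matrix (Fin 2) (Fin 2) ℤ) - !![a, b; c, a]).mulVec v = ![ξ₁, ξ₂]) :
    (!![1, 0, 0; ξ₁, a, b; ξ₂, c, a] : Matrix (Fin 3) (Fin 3) ℤ).det = 1 ∧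
    ¬ ∃ (P : GL (Fin 3) ℤ) (ε m₁₁ m₁₂ m₂₁ m₂₂ : ℤ),
      (P : Matrix (Fin 3) (Fin 3) ℤ) * !![1, 0, 0; ξ₁, a, b; ξ₂, c, a] *
        ((P⁻¹ : GL (Fin 3) ℤ) : Matrix (Fin 3) (Fin 3) ℤ)
        = !![ε, 0, 0; 0, m₁₁, m₁₂; 0, m₂₁, m₂₂] := by
  refine ⟨?_, ?_⟩
  · simp [Matrix.det_fin_three]
    linarith
  rintro ⟨P, ε, m₁₁, m₁₂, m₂₁, m₂₂, hP⟩
  obtain ⟨p, hp⟩ : ∃ p : Matrix (Fin 3) (Fin 3) ℤ, p = (P : Matrix (Fin 3) (Fin 3) ℤ) := ⟨_, rfl⟩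
  obtain ⟨q, hq⟩ : ∃ q : Matrix (Fin 3) (Fin 3) ℤ,
    q = ((P⁻¹ : GL (Fin 3) ℤ) : Matrix (Fin 3) (Fin 3) ℤ) := ⟨_, rfl⟩
  have hpq : p * q = 1 := by rw [hp, hq, ← Units.val_mul, mul_inv_cancel, Units.val_one]
  have hqp : q * p = 1 := by rw [hp, hq, ← Units.val_mul, inv_mul_cancel, Units.val_one]
  rw [← hp, ← hq] at hP
  -- row and column forms of the conjugacy relation
  have hrow : p * !![1, 0, 0; ξ₁, a, b; ξ₂, c, a] = !![ε, 0, 0; 0, m₁₁, m₁₂; 0, m₂₁, m₂₂] * p := by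
    rw [← hP, Matrix.mul_assoc _ q p, hqp, Matrix.mul_one]
  have hcol : !![1, 0, 0; ξ₁, a, b; ξ₂, c, a] * q = q * !![ε, 0, 0; 0, m₁₁, m₁₂; 0, m₂₁, m₂₂] := by
    rw [← hP, ← Matrix.mul_assoc, ← Matrix.mul_assoc, hqp, Matrix.one_mul]
  have r0 := congrFun (congrFun hrow 0) 0
  have r1 := congrFun (congrFun hrow 0) 1
  have r2 := congrFun (congrFun hrow 0) 2
  have c1 := congrFun (congrFun hcol 1) 0
  have c2 := congrFun (congrFun hcol 2) 0
  have d := congrFun (congrFun hpq 0) 0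
  simp [Matrix.mul_apply, Fin.sum_univ_three] at r0 r1 r2 c1 c2 d
  -- `ε` is not a root of `x² - 2 a x + 1`
  have hne : (a - ε) ^ 2 - b * c ≠ 0 := by
    intro h0
    have h1 : (a - (a - ε)) * (a + (a - ε)) = 1 := by linarith
    rcases Int.mul_eq_one_iff_eq_one_or_neg_one.mp h1 with ⟨h2, h3⟩ | ⟨h2, h3⟩ <;> omega
  have hp1 : p 0 1 = 0 := by
    refine (mul_eq_zero.mp (?_ : ((a - ε) ^ 2 - b * c) * p 0 1 = 0)).resolve_left hne
    linear_combination (a - ε) * r1 - c * r2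
  have hp2 : p 0 2 = 0 := by
    refine (mul_eq_zero.mp (?_ : ((a - ε) ^ 2 - b * c) * p 0 2 = 0)).resolve_left hne
    linear_combination (a - ε) * r2 - b * r1
  rw [hp1, hp2] at d r0
  have d' : p 0 0 * q 0 0 = 1 := by linarith
  have hε : ε = 1 := by linear_combination (1 - ε) * d' - q 0 0 * r0
  subst hε
  apply hξ
  refine ⟨![p 0 0 * q 1 0, p 0 0 * q 2 0], ?_⟩
  ext i
  fin_cases i
  · simp [Matrix.mulVec, dotProduct, Fin.sum_univ_two, Matrix.one_apply]
    linear_combination ξ₁ * d' - p 0 0 * c1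
  · simp [Matrix.mulVec, dotProduct, Fin.sum_univ_two, Matrix.one_apply]
    linear_combination ξ₂ * d' - p 0 0 * c2
end

section
/- Let G₂ = ℤ² ⋊_φ ℤ, where φ : ℤ → Aut(ℤ²) sends n to multiplication by (-1)ⁿ. Then the subgroup ℤ² × {0} = {(v,0) : v ∈ ℤ²} is characteristic in G₂: every automorphism of G₂ maps it onto itself. -/
open SemidirectProduct

/-- The action `φ : ℤ → Aut(ℤ²)` sending `n` to multiplication by `(-1)ⁿ`
(the generator acts by negation), written multiplicatively. -/
def phi : Multiplicative ℤ →* MulAut (Multiplicative (ℤ × ℤ)) :=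
  zpowersHom (MulAut (Multiplicative (ℤ × ℤ))) (MulEquiv.inv (Multiplicative (ℤ × ℤ)))

/-- `G₂ = ℤ² ⋊_φ ℤ`, the fundamental group of the half-turn flat 3-manifold. -/
abbrev G₂ : Type := Multiplicative (ℤ × ℤ) ⋊[phi] Multiplicative ℤ

theorem hom_kills_ker (h : G₂ →* Multiplicative ℤ) (x : G₂)
    (hx : x ∈ (rightHom : G₂ →* Multiplicative ℤ).ker) : h x = 1 := by
  have hx' : x ∈ (inl : Multiplicative (ℤ × ℤ) →* G₂).range := by
    rw [range_inl_eq_ker_rightHom]; exact hx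
  obtain ⟨v, rfl⟩ := hx'
  have hp : phi (Multiplicative.ofAdd 1) v = v⁻¹ := by
    simp [phi]
  have key := congrArg h (inl_aut (φ := phi) (Multiplicative.ofAdd 1) v)
  rw [hp] at key
  simp only [map_mul, map_inv] at key
  rw [mul_comm (h (inr _)), mul_assoc] at key
  have e : h (inr (Multiplicative.ofAdd 1)) * (h (inr (Multiplicative.ofAdd 1)))⁻¹ = 1 :=
    mul_inv_cancel _
  rw [e, mul_one] at key
  have k2 := congrArg Multiplicative.toAdd key
  rw [toAdd_inv] at k2
  apply Multiplicative.toAdd.injective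
  rw [toAdd_one]
  omega

/-- The subgroup `ℤ² × {0} = {(v,0) : v ∈ ℤ²}` of `G₂` is characteristic:
every automorphism of `G₂` maps it onto itself. -/
theorem Z2_char_in_G2 (f : G₂ ≃* G₂) :
    Subgroup.map f.toMonoidHom (rightHom : G₂ →* Multiplicative ℤ).ker
      = (rightHom : G₂ →* Multiplicative ℤ).ker := by
  ext y
  constructor
  · rintro ⟨x, hx, rfl⟩
    exact hom_kills_ker ((rightHom : G₂ →* Multiplicative ℤ).comp f.toMonoidHom) x hx
  · intro hy
    refine ⟨f.symm y, ?_, f.apply_symm_apply y⟩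
    exact hom_kills_ker ((rightHom : G₂ →* Multiplicative ℤ).comp f.symm.toMonoidHom) y hy
end
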